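/- In the setting of the previous optimization, when n < 4ρ², the optimal α* = (n/(n+m))(1 + √(m²/(4ρ²(n+m) − nm))) satisfies α* ∈ (n/(n+m), 1); in particular α* strictly exceeds the natural weight n/(n+m) whenever D > 0. -/

import Mathlib

open MeasureTheory Real Filter
open scoped NNReal ENNReal
noncomputable def phi (x : ℝ) : ℝ := (Real.sqrt (2*Real.pi))⁻¹ * Real.exp (-x^2/2)
noncomputable def Phi (t : ℝ) : ℝ := ∫ x in Set.Iio t, phi x

theorem stmt14 (n m C D : ℝ) (hn : 0 < n) (hm : 0 < m) (hC : 0 < C) (hD : 0 < D)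
    (h : n < 4 * (C / D) ^ 2) :
    n / (n + m) <
      (n / (n + m)) * (1 + Real.sqrt (m ^ 2 / (4 * (C / D) ^ 2 * (n + m) - n * m))) ∧
    (n / (n + m)) * (1 + Real.sqrt (m ^ 2 / (4 * (C / D) ^ 2 * (n + m) - n * m))) < 1 := by
  generalize 4 * (C / D) ^ 2 = R at h ⊢
  have hK : n ^ 2 < R * (n + m) - n * m := by nlinarith
  have hK0 : 0 < R * (n + m) - n * m := lt_of_le_of_lt (sq_nonneg n) hK
  have hs : 0 < Real.sqrt (m ^ 2 / (R * (n + m) - n * m)) := Real.sqrt_pos.mpr (by positivity)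
  have hs2 : Real.sqrt (m ^ 2 / (R * (n + m) - n * m)) < m / n := by
    rw [Real.sqrt_lt' (by positivity), div_pow]
    exact div_lt_div_of_pos_left (by positivity) (by positivity) hK
  rw [lt_div_iff₀ hn] at hs2
  have hq : 0 < n / (n + m) := by positivity
  refine ⟨by nlinarith [mul_pos hq hs], ?_⟩
  rw [div_mul_eq_mul_div, div_lt_one (by positivity)]
  nlinarith
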